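/- Let 0 < φ < 1, let f be the density of an absolutely continuous nonnegative random variable Z with distribution function F satisfying F(0) = 0 and with finite variance, let v : [0,∞) → ℝ be locally bounded, assume F and v belong to C²₀([0,∞)), and let m be the locally bounded solution of m(u) = φ ∫₀^u m(u−y) f(y) dy + v(u). Define w₁(u) := φ v(0) f(u) + v'(u). Then: (i) sup_{u>0} |m'(u)| ≤ ‖w₁‖/(1−φ); (ii) sup_{u>0} |u m'(u)| ≤ ( φ E[Z] ‖m'‖ + sup_{u>0} |u w₁(u)| )/(1−φ); (iii) sup_{u>0} |u² m'(u)| ≤ ( φ ( 2 E[Z] · sup_{u>0}|u m'(u)| + E[Z²] ‖m'‖ ) + sup_{u>0} |u² w₁(u)| )/(1−φ). (The right-hand sides may be infinite.) -/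

import Mathlib

open MeasureTheory Filter Topology
open scoped ENNReal

/-- The function `w₁(u) = φ m(0) f(u) + v'(u)` (with `m(0) = v(0)`). -/
noncomputable def w1 (φ : ℝ) (v f : ℝ → ℝ) : ℝ → ℝ :=
  fun u => φ * v 0 * f u + deriv v u

/-!
Convolving a locally integrable function with a primitive gives a primitive (Fubini on a triangle).
As `f` extends to a primitive on `[0, ∞)`, the renewal equation makes `m` a primitive; inserting
this in the equation again shows that `m'` is locally bounded and solves the renewal equation with
`w₁` in place of `v`. Multiply the latter by `uⁿ = ((u - y) + y)ⁿ`, expand, and take suprema over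
`(0, T]`, where they are finite: the term of order `n` on the right is absorbed in the left-hand
side, and `T → ∞`.

Local boundedness does not make `m` measurable. Let `B` be the largest open subset of the line on
which it is. If `u = x + y` with `0 < x ∉ B`, `0 < y` and `f y ≠ 0`, the integrand in the equation
is not integrable and the integral is `0` by convention; for every other `u > 0` the integral only
sees `m` on `B`. Hence the right-hand side of the equation is measurable.
-/

open Set

/-- The convolution of two functions on the half-line: `u ↦ ∫₀^u g t * h (u - t) dt` for `0 < u`,
and `0` for `u ≤ 0`. -/
noncomputable def causalConv (g h : ℝ → ℝ) : ℝ → ℝ :=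
  posConvolution g h (ContinuousLinearMap.mul ℝ ℝ) volume

section CausalConvolution

theorem locallyIntegrableOn_Ici_iff_forall_integrableOn_Ioc {E : Type*} [NormedAddCommGroup E]
    {a : ℝ} {g : ℝ → E} :
    LocallyIntegrableOn g (Ici a) ↔ ∀ b, IntegrableOn g (Ioc a b) := by
  refine ⟨fun hg b => ?_, fun hg x _ => ?_⟩
  · exact (hg.integrableOn_compact_subset Icc_subset_Ici_self isCompact_Icc).mono_set
      Ioc_subset_Icc_self
  · refine ⟨Icc a (x + 1), ?_, (integrableOn_Icc_iff_integrableOn_Ioc).2 (hg _)⟩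
    rw [← Ici_inter_Iic]
    exact inter_mem_nhdsWithin _ (Iic_mem_nhds (by linarith))

theorem intervalIntegrable_of_locallyIntegrableOn_Ici {E : Type*} [NormedAddCommGroup E]
    {a b : ℝ} {g : ℝ → E} (hg : LocallyIntegrableOn g (Ici a)) (hab : a ≤ b) :
    IntervalIntegrable g volume a b :=
  (intervalIntegrable_iff_integrableOn_Ioc_of_le hab).2
    (locallyIntegrableOn_Ici_iff_forall_integrableOn_Ioc.1 hg b)

variable {g h : ℝ → ℝ} {T u : ℝ}

theorem causalConv_eq_convolution : causalConv g h =
    convolution ((Ioi 0).indicator g) ((Ioi 0).indicator h) (ContinuousLinearMap.mul ℝ ℝ) :=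
  posConvolution_eq_convolution_indicator _ _ _ _

theorem causalConv_apply (hu : 0 ≤ u) :
    causalConv g h u = ∫ t in (0 : ℝ)..u, g t * h (u - t) := by
  rcases hu.eq_or_lt with rfl | hu
  · simp [causalConv, posConvolution]
  · simp [causalConv, posConvolution, hu]

theorem causalConv_comm : causalConv g h = causalConv h g := by
  simp only [causalConv_eq_convolution]
  rw [← convolution_flip]
  congr 1
  ext
  simp

theorem causalConv_congr {g' h' : ℝ → ℝ} (hg : EqOn g g' (Ioi 0)) (hh : EqOn h h' (Ioi 0)) :
    causalConv g h = causalConv g' h' := by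
  simp only [causalConv_eq_convolution, indicator_congr hg, indicator_congr hh]

theorem causalConv_indicator_Ioc (hu : u ≤ T) :
    causalConv ((Ioc 0 T).indicator g) ((Ioc 0 T).indicator h) u = causalConv g h u := by
  simp only [causalConv_eq_convolution, convolution_def]
  refine integral_congr_ae (Eventually.of_forall fun t => ?_)
  by_cases ht : 0 < t ∧ t < u
  · have h1 : t ≤ T := by linarith
    have h2 : u ≤ T + t := by linarith
    simp [indicator, ht, h1, h2]
  · rw [not_and_or] at ht
    rcases ht with ht | ht <;> simp [ht]

theorem aestronglyMeasurable_causalConv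
    (hg : AEStronglyMeasurable g (volume.restrict (Ioi 0)))
    (hh : AEStronglyMeasurable h (volume.restrict (Ioi 0))) :
    AEStronglyMeasurable (causalConv g h) := by
  rw [← aestronglyMeasurable_indicator_iff measurableSet_Ioi] at hg hh
  rw [causalConv_eq_convolution]
  exact (hg.convolution_integrand _ hh).integral_prod_right'

theorem locallyIntegrableOn_causalConv (hg : LocallyIntegrableOn g (Ici 0))
    (hh : LocallyIntegrableOn h (Ici 0)) : LocallyIntegrableOn (causalConv g h) (Ici 0) := by
  rw [locallyIntegrableOn_Ici_iff_forall_integrableOn_Ioc] at hg hh ⊢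
  intro T
  have hconv := integrable_posConvolution
    ((integrable_indicator_iff measurableSet_Ioc).2 (hg T)).integrableOn
    ((integrable_indicator_iff measurableSet_Ioc).2 (hh T)).integrableOn
    (ContinuousLinearMap.mul ℝ ℝ)
  exact hconv.integrableOn.congr_fun (fun u hu => causalConv_indicator_Ioc hu.2)
    measurableSet_Ioc

theorem integral_causalConv_eq (hg : LocallyIntegrableOn g (Ici 0))
    (hh : LocallyIntegrableOn h (Ici 0)) (hu : 0 ≤ u) :
    ∫ s in (0 : ℝ)..u, causalConv g h s = causalConv g (fun x => ∫ t in (0 : ℝ)..x, h t) u := by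
  rw [locallyIntegrableOn_Ici_iff_forall_integrableOn_Ioc] at hg hh
  set G := (Ioc 0 u).indicator g with hG
  set H := (Ioc 0 u).indicator h
  have hGH : Integrable (fun p : ℝ × ℝ => G p.2 * H (p.1 - p.2))
      ((volume.restrict (Ioc 0 u)).prod volume) :=
    (((integrable_indicator_iff measurableSet_Ioc).2 (hg u)).convolution_integrand
      (ContinuousLinearMap.mul ℝ ℝ) ((integrable_indicator_iff measurableSet_Ioc).2
        (hh u))).mono_measure (Measure.prod_mono Measure.restrict_le_self le_rfl)
  have hinner : ∀ t ∈ Ioc 0 u, ∫ s in Ioc 0 u, H (s - t) = ∫ x in (0 : ℝ)..u - t, h x := by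
    intro t ht
    rw [← intervalIntegral.integral_of_le hu, intervalIntegral.integral_comp_sub_right,
      intervalIntegral.integral_of_le (by linarith), setIntegral_indicator measurableSet_Ioc,
      Ioc_inter_Ioc, intervalIntegral.integral_of_le (by linarith [ht.2])]
    congr 3
    · simp [ht.1.le]
    · simp [ht.1.le]
  calc ∫ s in (0 : ℝ)..u, causalConv g h s
      = ∫ s in Ioc 0 u, ∫ t, G t * H (s - t) := by
        rw [intervalIntegral.integral_of_le hu]
        refine setIntegral_congr_fun measurableSet_Ioc fun s hs => ?_
        rw [← causalConv_indicator_Ioc hs.2,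
          causalConv_eq_convolution, indicator_indicator,
          indicator_indicator, inter_eq_right.2 Ioc_subset_Ioi_self]
        rfl
    _ = ∫ t, G t * ∫ s in Ioc 0 u, H (s - t) := by
        rw [integral_integral_swap hGH]
        simp only [integral_const_mul]
    _ = ∫ t in Ioc 0 u, g t * ∫ x in (0 : ℝ)..u - t, h x := by
        rw [← integral_indicator measurableSet_Ioc]
        refine integral_congr_ae (Eventually.of_forall fun t => ?_)
        by_cases ht : t ∈ Ioc 0 u
        · simp only [hG, indicator_of_mem ht, hinner t ht]
        · simp only [hG, indicator_of_notMem ht, zero_mul]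
    _ = causalConv g (fun x => ∫ t in (0 : ℝ)..x, h t) u := by
        rw [causalConv_apply hu, intervalIntegral.integral_of_le hu]

end CausalConvolution

/-- `G` is the primitive of the locally integrable function `g` on `[0, ∞)`: it is locally
absolutely continuous there, with density `g`. Only the values on `[0, ∞)` matter. -/
structure IsLocalPrimitive (G g : ℝ → ℝ) : Prop where
  locallyIntegrableOn : LocallyIntegrableOn g (Ici 0)
  eq_add_integral : ∀ u, 0 ≤ u → G u = G 0 + ∫ t in (0 : ℝ)..u, g t

namespace IsLocalPrimitive

variable {G H g h : ℝ → ℝ} {u : ℝ}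

theorem intervalIntegrable (hG : IsLocalPrimitive G g) (hu : 0 ≤ u) :
    IntervalIntegrable g volume 0 u :=
  intervalIntegrable_of_locallyIntegrableOn_Ici hG.locallyIntegrableOn hu

theorem congr (hG : IsLocalPrimitive G g) (hGH : EqOn H G (Ici 0)) : IsLocalPrimitive H g where
  locallyIntegrableOn := hG.locallyIntegrableOn
  eq_add_integral u hu := by rw [hGH hu, hGH self_mem_Ici, hG.eq_add_integral u hu]

theorem add (hG : IsLocalPrimitive G g) (hH : IsLocalPrimitive H h) :
    IsLocalPrimitive (fun u => G u + H u) (fun u => g u + h u) where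
  locallyIntegrableOn := hG.locallyIntegrableOn.add hH.locallyIntegrableOn
  eq_add_integral u hu := by
    rw [intervalIntegral.integral_add (hG.intervalIntegrable hu) (hH.intervalIntegrable hu),
      hG.eq_add_integral u hu, hH.eq_add_integral u hu]
    ring

theorem const_mul (hG : IsLocalPrimitive G g) (c : ℝ) :
    IsLocalPrimitive (fun u => c * G u) (fun u => c * g u) where
  locallyIntegrableOn := hG.locallyIntegrableOn.smul c
  eq_add_integral u hu := by
    rw [intervalIntegral.integral_const_mul, hG.eq_add_integral u hu, mul_add]

protected theorem continuousOn (hG : IsLocalPrimitive G g) : ContinuousOn G (Ici 0) := by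
  intro u (hu : 0 ≤ u)
  have hIcc : ContinuousOn (fun x => G 0 + ∫ t in (0 : ℝ)..x, g t) (Icc 0 (u + 1)) :=
    continuousOn_const.add (intervalIntegral.continuousOn_primitive_interval'
      (hG.intervalIntegrable (by linarith)) left_mem_uIcc |>.mono Icc_subset_uIcc)
  have hG_Icc : ContinuousWithinAt G (Icc 0 (u + 1)) u :=
    (hIcc u ⟨hu, by linarith⟩).congr (fun x hx => hG.eq_add_integral x hx.1)
      (hG.eq_add_integral u hu)
  refine hG_Icc.mono_of_mem_nhdsWithin ?_
  rw [← Ici_inter_Iic]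
  exact inter_mem_nhdsWithin _ (Iic_mem_nhds (by linarith))

protected theorem hasDerivAt (hG : IsLocalPrimitive G g) (hg : ContinuousOn g (Ici 0))
    (hu : 0 < u) : HasDerivAt G (g u) u := by
  have hg_Ioi : ContinuousOn g (Ioi 0) := hg.mono Ioi_subset_Ici_self
  have hint : HasDerivAt (fun x => G 0 + ∫ t in (0 : ℝ)..x, g t) (g u) u :=
    (intervalIntegral.integral_hasDerivAt_right (hG.intervalIntegrable hu.le)
      (hg_Ioi.stronglyMeasurableAtFilter isOpen_Ioi u hu)
      (hg_Ioi.continuousAt (Ioi_mem_nhds hu))).const_add (G 0)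
  refine hint.congr_of_eventuallyEq ?_
  filter_upwards [Ioi_mem_nhds hu] with x hx using hG.eq_add_integral x (le_of_lt hx)

protected theorem causalConv (hG : IsLocalPrimitive G g) (hh : LocallyIntegrableOn h (Ici 0)) :
    IsLocalPrimitive (causalConv h G) (fun u => G 0 * h u + causalConv h g u) where
  locallyIntegrableOn :=
    (hh.smul (G 0)).add (locallyIntegrableOn_causalConv hh hG.locallyIntegrableOn)
  eq_add_integral u hu := by
    have hh_int : IntervalIntegrable h volume 0 u :=
      intervalIntegrable_of_locallyIntegrableOn_Ici hh hu
    have hG_cont : ContinuousOn (fun t => G (u - t)) (uIcc 0 u) :=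
      hG.continuousOn.comp (by fun_prop) fun t ht => by
        rw [uIcc_of_le hu] at ht
        exact sub_nonneg.2 ht.2
    have hsplit : causalConv h (fun x => ∫ t in (0 : ℝ)..x, g t) u =
        (∫ t in (0 : ℝ)..u, h t * G (u - t)) - ∫ t in (0 : ℝ)..u, G 0 * h t := by
      rw [causalConv_apply hu, ← intervalIntegral.integral_sub
        (hh_int.mul_continuousOn hG_cont) (hh_int.const_mul _)]
      refine intervalIntegral.integral_congr fun t ht => ?_
      rw [uIcc_of_le hu] at ht
      simp only [hG.eq_add_integral (u - t) (sub_nonneg.2 ht.2)]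
      ring
    rw [intervalIntegral.integral_add (hh_int.const_mul _)
      (intervalIntegrable_of_locallyIntegrableOn_Ici
        (locallyIntegrableOn_causalConv hh hG.locallyIntegrableOn) hu),
      integral_causalConv_eq hh hG.locallyIntegrableOn hu, hsplit,
      causalConv_apply hu, causalConv_apply le_rfl]
    simp

end IsLocalPrimitive

section RenewalEquation

variable {φ : ℝ} {b k k' m v D : ℝ → ℝ}

theorem IsLocalPrimitive.of_renewal (hm : IsLocalPrimitive m D)
    (hk : LocallyIntegrableOn k (Ici 0)) (hv : IsLocalPrimitive v b)
    (hm_eq : ∀ u, 0 ≤ u → m u = φ * causalConv k m u + v u) :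
    IsLocalPrimitive m (fun u => φ * (m 0 * k u + causalConv k D u) + b u) :=
  (((hm.causalConv hk).const_mul φ).add hv).congr hm_eq

theorem exists_continuousOn_deriv_renewal (hk : IsLocalPrimitive k k') (hv : IsLocalPrimitive v b)
    (hb : ContinuousOn b (Ici 0)) (hm : LocallyIntegrableOn m (Ici 0))
    (hm_eq : ∀ u, 0 ≤ u → m u = φ * causalConv k m u + v u) :
    ∃ D, ContinuousOn D (Ici 0) ∧ (∀ u, 0 < u → HasDerivAt m (D u) u) ∧
      ∀ u, 0 < u → D u = φ * causalConv k D u + (φ * v 0 * k u + b u) := by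
  have hk_loc : LocallyIntegrableOn k (Ici 0) :=
    hk.continuousOn.locallyIntegrableOn measurableSet_Ici
  have hm_zero : m 0 = v 0 := by
    rw [hm_eq 0 le_rfl, causalConv_apply le_rfl]
    simp
  have hcont {D : ℝ → ℝ} (hD : IsLocalPrimitive m D) :
      ContinuousOn (fun u => φ * (m 0 * k u + causalConv k D u) + b u) (Ici 0) := by
    rw [causalConv_comm]
    exact (continuousOn_const.mul ((continuousOn_const.mul hk.continuousOn).add
      (hk.causalConv hD.locallyIntegrableOn).continuousOn)).add hb
  have hm_prim : IsLocalPrimitive m (fun u => φ * (k 0 * m u + causalConv m k' u) + b u) :=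
    (((hk.causalConv hm).const_mul φ).add hv).congr fun u hu => by
      rw [hm_eq u hu, causalConv_comm]
  have hE := hm_prim.of_renewal hk_loc hv hm_eq
  have hE_cont := hcont hm_prim
  refine ⟨_, hE_cont, fun u hu => hE.hasDerivAt hE_cont hu, fun u hu => ?_⟩
  rw [(hE.hasDerivAt hE_cont hu).unique
    ((hE.of_renewal hk_loc hv hm_eq).hasDerivAt (hcont hE) hu), hm_zero]
  ring

end RenewalEquation

section MeasurableOpen

variable {X E : Type*} [TopologicalSpace X] [MeasurableSpace X] [TopologicalSpace E]

/-- The largest open set on which `m` is almost everywhere strongly measurable: the solutions of a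
renewal equation are not assumed to be measurable, and this is how far they are known to be. -/
def measurableOpen (m : X → E) (μ : Measure X) : Set X :=
  ⋃₀ {O | IsOpen O ∧ AEStronglyMeasurable m (μ.restrict O)}

variable {m : X → E} {μ : Measure X}

theorem isOpen_measurableOpen : IsOpen (measurableOpen m μ) :=
  isOpen_sUnion fun _ hO => hO.1

theorem subset_measurableOpen {O : Set X} (hO : IsOpen O)
    (hm : AEStronglyMeasurable m (μ.restrict O)) : O ⊆ measurableOpen m μ :=
  subset_sUnion_of_mem ⟨hO, hm⟩

theorem aestronglyMeasurable_restrict_measurableOpen [SecondCountableTopology X]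
    [TopologicalSpace.PseudoMetrizableSpace E] :
    AEStronglyMeasurable m (μ.restrict (measurableOpen m μ)) := by
  obtain ⟨T, hT_countable, hT_sub, hT_eq⟩ := TopologicalSpace.isOpen_sUnion_countable
    {O | IsOpen O ∧ AEStronglyMeasurable m (μ.restrict O)} fun _ hO => hO.1
  have := hT_countable.to_subtype
  rw [measurableOpen, ← hT_eq, sUnion_eq_iUnion]
  exact aestronglyMeasurable_iUnion_iff.2 fun O => (hT_sub O.2).2

end MeasurableOpen

section MeasurableSolution

open scoped Pointwise

variable {φ u : ℝ} {k m v : ℝ → ℝ}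

theorem sub_mem_measurableOpen_of_intervalIntegrable (hk : ContinuousOn k (Ioi 0))
    (hint : IntervalIntegrable (fun t => k t * m (u - t)) volume 0 u) {y : ℝ}
    (hy : y ∈ Ioo 0 u) (hky : k y ≠ 0) : u - y ∈ measurableOpen m volume := by
  set U := Ioo 0 u ∩ k ⁻¹' {0}ᶜ
  have hU : IsOpen U :=
    (hk.mono Ioo_subset_Ioi_self).isOpen_inter_preimage isOpen_Ioo isOpen_compl_singleton
  have hU_sub : U ⊆ Ioc 0 u := inter_subset_left.trans Ioo_subset_Ioc_self
  have hk_meas : AEStronglyMeasurable k (volume.restrict U) :=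
    (hk.mono (inter_subset_left.trans Ioo_subset_Ioi_self)).aestronglyMeasurable hU.measurableSet
  have hm_meas : AEStronglyMeasurable (fun t => m (u - t)) (volume.restrict U) := by
    refine (hk_meas.inv₀.mul (hint.1.aestronglyMeasurable.mono_set hU_sub)).congr ?_
    filter_upwards [ae_restrict_mem hU.measurableSet] with t ht
    exact inv_mul_cancel_left₀ ht.2 _
  have hreflect := hm_meas.comp_measurePreserving
    ((Measure.measurePreserving_sub_left volume u).restrict_preimage hU.measurableSet)
  refine subset_measurableOpen (hU.preimage (by fun_prop : Continuous fun x => u - x))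
    (hreflect.congr (Eventually.of_forall fun x => ?_)) ?_
  · simp
  · simpa [U, and_comm] using And.intro hy hky

theorem aestronglyMeasurable_of_renewal (hk : ContinuousOn k (Ioi 0))
    (hv : ContinuousOn v (Ioi 0))
    (hm_eq : ∀ u, 0 < u → m u = φ * causalConv k m u + v u) :
    AEStronglyMeasurable m (volume.restrict (Ioi 0)) := by
  set B := measurableOpen m volume
  set S := Ioi 0 ∩ k ⁻¹' {0}ᶜ
  set A := ((Ioi 0 \ B) + S)ᶜ
  have hS : IsOpen S := hk.isOpen_inter_preimage isOpen_Ioi isOpen_compl_singleton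
  have hA : MeasurableSet A := hS.add_left.measurableSet.compl
  have hconv_on : ∀ u ∈ A, 0 < u → causalConv k m u = causalConv k (B.indicator m) u := by
    intro u huA hu
    rw [causalConv_apply hu.le, causalConv_apply hu.le,
      intervalIntegral.integral_of_le hu.le, intervalIntegral.integral_of_le hu.le,
      integral_Ioc_eq_integral_Ioo, integral_Ioc_eq_integral_Ioo]
    refine setIntegral_congr_fun measurableSet_Ioo fun t ht => ?_
    by_cases hkt : k t = 0
    · simp [hkt]
    · have huB : u - t ∈ B := by
        by_contra huB
        exact huA ⟨u - t, ⟨sub_pos.2 ht.2, huB⟩, t, ⟨ht.1, hkt⟩, sub_add_cancel u t⟩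
      simp [indicator_of_mem huB]
  have hconv_off : ∀ u ∉ A, causalConv k m u = 0 := by
    intro u huA
    obtain ⟨x, ⟨hx, hxB⟩, y, ⟨hy, hky⟩, rfl⟩ := not_not.1 huA
    rw [causalConv_apply (add_pos hx hy).le]
    refine intervalIntegral.integral_undef fun hint => hxB ?_
    simpa using sub_mem_measurableOpen_of_intervalIntegrable hk hint
      ⟨hy, lt_add_of_pos_left y hx⟩ hky
  have hconv_meas : AEStronglyMeasurable (causalConv k (B.indicator m)) :=
    aestronglyMeasurable_causalConv (hk.aestronglyMeasurable measurableSet_Ioi)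
      ((aestronglyMeasurable_indicator_iff isOpen_measurableOpen.measurableSet).2
        aestronglyMeasurable_restrict_measurableOpen).restrict
  refine (((hconv_meas.indicator hA).restrict.const_mul φ).add
    (hv.aestronglyMeasurable measurableSet_Ioi)).congr ?_
  filter_upwards [ae_restrict_mem measurableSet_Ioi] with u hu
  rw [hm_eq u hu]
  by_cases huA : u ∈ A
  · simp [huA, hconv_on u huA hu]
  · simp [huA, hconv_off u huA]

end MeasurableSolution

section WeightedBounds

variable {φ : ℝ} {n : ℕ} {s t : Set ℝ} {f g D w : ℝ → ℝ}

/-- The weighted supremum `‖uⁿ g(u)‖` over `s`, with values in `[0, ∞]`. -/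
noncomputable def weightedSup (s : Set ℝ) (n : ℕ) (g : ℝ → ℝ) : ℝ≥0∞ :=
  ⨆ u ∈ s, ‖u ^ n * g u‖ₑ

/-- The absolute moment `∫₀^∞ |yⁿ f(y)| dy`, with values in `[0, ∞]`. For the density `f` of a
nonnegative random variable `Z` it is `E[Zⁿ]`. -/
noncomputable def absMoment (f : ℝ → ℝ) (n : ℕ) : ℝ≥0∞ :=
  ∫⁻ y in Ioi 0, ‖y ^ n * f y‖ₑ

theorem absMoment_eq_ofReal_integral (hf : ∀ y, 0 < y → 0 ≤ f y)
    (hint : IntegrableOn (fun y => y ^ n * f y) (Ioi 0)) :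
    absMoment f n = ENNReal.ofReal (∫ y in Ioi 0, y ^ n * f y) := by
  rw [absMoment, ← ofReal_integral_norm_eq_lintegral_enorm hint]
  congr 1
  exact setIntegral_congr_fun measurableSet_Ioi fun y hy =>
    Real.norm_of_nonneg (mul_nonneg (pow_nonneg (le_of_lt hy) n) (hf y hy))

theorem enorm_le_weightedSup {u : ℝ} (hu : u ∈ s) : ‖u ^ n * g u‖ₑ ≤ weightedSup s n g :=
  le_iSup₂ (f := fun u (_ : u ∈ s) => ‖u ^ n * g u‖ₑ) u hu

theorem weightedSup_mono (hst : s ⊆ t) : weightedSup s n g ≤ weightedSup t n g :=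
  biSup_mono hst

theorem weightedSup_Ioi_le_of_forall_Ioc {R : ℝ≥0∞} (h : ∀ T, weightedSup (Ioc 0 T) n g ≤ R) :
    weightedSup (Ioi 0) n g ≤ R :=
  iSup₂_le fun u hu => (enorm_le_weightedSup (right_mem_Ioc.2 hu)).trans (h u)

theorem weightedSup_ne_top_of_bounded {M T : ℝ} (hg : ∀ u ∈ Ioc 0 T, |g u| ≤ M) :
    weightedSup (Ioc 0 T) n g ≠ ∞ := by
  refine ne_top_of_le_ne_top (ENNReal.ofReal_ne_top (r := T ^ n * M)) (iSup₂_le fun u hu => ?_)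
  rw [Real.enorm_eq_ofReal_abs, abs_mul, abs_of_nonneg (pow_nonneg hu.1.le n)]
  exact ENNReal.ofReal_le_ofReal (mul_le_mul (pow_le_pow_left₀ hu.1.le hu.2 n) (hg u hu)
    (abs_nonneg _) (pow_nonneg (hu.1.le.trans hu.2) n))

theorem enorm_pow_mul_mul_sub_le {T u y : ℝ} (hy : y ∈ Ioo 0 u) (hu : u ≤ T) :
    ‖u ^ n * (f y * g (u - y))‖ₑ ≤ ∑ j ∈ Finset.range (n + 1),
      n.choose j * weightedSup (Ioc 0 T) j g * ‖y ^ (n - j) * f y‖ₑ := by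
  have hbinom : u ^ n * (f y * g (u - y)) = ∑ j ∈ Finset.range (n + 1),
      n.choose j * ((u - y) ^ j * g (u - y)) * (y ^ (n - j) * f y) := by
    conv_lhs => rw [← sub_add_cancel u y, add_pow, sub_add_cancel, Finset.sum_mul]
    exact Finset.sum_congr rfl fun j _ => by ring
  rw [hbinom]
  refine (enorm_sum_le _ _).trans (Finset.sum_le_sum fun j _ => ?_)
  rw [enorm_mul, enorm_mul, Real.enorm_natCast]
  gcongr
  exact enorm_le_weightedSup ⟨sub_pos.2 hy.2, by linarith [hy.1]⟩

theorem weightedSup_causalConv_le (hf : AEMeasurable f (volume.restrict (Ioi 0))) (T : ℝ) :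
    weightedSup (Ioc 0 T) n (causalConv f g) ≤ ∑ j ∈ Finset.range (n + 1),
      n.choose j * absMoment f (n - j) * weightedSup (Ioc 0 T) j g := by
  refine iSup₂_le fun u hu => ?_
  have hf_meas (j : ℕ) : AEMeasurable (fun y => ‖y ^ j * f y‖ₑ) (volume.restrict (Ioi 0)) := by
    fun_prop
  rw [causalConv_apply hu.1.le, intervalIntegral.integral_of_le hu.1.le,
    integral_Ioc_eq_integral_Ioo, ← integral_const_mul]
  calc ‖∫ y in Ioo 0 u, u ^ n * (f y * g (u - y))‖ₑ
      ≤ ∫⁻ y in Ioo 0 u, ‖u ^ n * (f y * g (u - y))‖ₑ := enorm_integral_le_lintegral_enorm _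
    _ ≤ ∫⁻ y in Ioo 0 u, ∑ j ∈ Finset.range (n + 1),
          n.choose j * weightedSup (Ioc 0 T) j g * ‖y ^ (n - j) * f y‖ₑ :=
        setLIntegral_mono' measurableSet_Ioo fun y hy => enorm_pow_mul_mul_sub_le hy hu.2
    _ ≤ ∫⁻ y in Ioi 0, ∑ j ∈ Finset.range (n + 1),
          n.choose j * weightedSup (Ioc 0 T) j g * ‖y ^ (n - j) * f y‖ₑ :=
        lintegral_mono_set Ioo_subset_Ioi_self
    _ = _ := by
        rw [lintegral_finsetSum' _ fun j _ => (hf_meas _).const_mul _]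
        refine Finset.sum_congr rfl fun j _ => ?_
        rw [lintegral_const_mul'' _ (hf_meas _), mul_right_comm, absMoment]

theorem le_div_one_sub_of_le_mul_add {q R X : ℝ≥0∞} (hq : q < 1) (hX : X ≠ ∞)
    (h : X ≤ q * X + R) : X ≤ R / (1 - q) := by
  rw [ENNReal.le_div_iff_mul_le (Or.inl (tsub_pos_of_lt hq).ne')
    (Or.inl (ENNReal.sub_ne_top ENNReal.one_ne_top)), ENNReal.mul_sub fun _ _ => hX, mul_one,
    mul_comm X q]
  exact tsub_le_iff_left.2 h

theorem weightedSup_le_of_renewal (hf : AEMeasurable f (volume.restrict (Ioi 0)))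
    (hq : ‖φ‖ₑ * absMoment f 0 < 1) (hD : ∀ T, ∃ M, ∀ u ∈ Ioc 0 T, |D u| ≤ M)
    (hD_eq : ∀ u, 0 < u → D u = φ * causalConv f D u + w u) :
    weightedSup (Ioi 0) n D ≤
      (‖φ‖ₑ * ∑ j ∈ Finset.range n,
          n.choose j * absMoment f (n - j) * weightedSup (Ioi 0) j D +
        weightedSup (Ioi 0) n w) / (1 - ‖φ‖ₑ * absMoment f 0) := by
  refine weightedSup_Ioi_le_of_forall_Ioc fun T => ?_
  have hT : Ioc 0 T ⊆ Ioi 0 := Ioc_subset_Ioi_self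
  obtain ⟨M, hM⟩ := hD T
  refine le_div_one_sub_of_le_mul_add hq (weightedSup_ne_top_of_bounded hM) ?_
  calc weightedSup (Ioc 0 T) n D
      ≤ ‖φ‖ₑ * weightedSup (Ioc 0 T) n (causalConv f D) + weightedSup (Ioc 0 T) n w := by
        refine iSup₂_le fun u hu => ?_
        rw [hD_eq u hu.1, mul_add, mul_left_comm]
        refine (enorm_add_le _ _).trans ?_
        rw [enorm_mul φ]
        gcongr <;> exact enorm_le_weightedSup hu
    _ ≤ ‖φ‖ₑ * (∑ j ∈ Finset.range (n + 1),
          n.choose j * absMoment f (n - j) * weightedSup (Ioc 0 T) j D) +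
          weightedSup (Ioc 0 T) n w := by
        gcongr
        exact weightedSup_causalConv_le hf T
    _ = ‖φ‖ₑ * absMoment f 0 * weightedSup (Ioc 0 T) n D +
          (‖φ‖ₑ * ∑ j ∈ Finset.range n,
            n.choose j * absMoment f (n - j) * weightedSup (Ioc 0 T) j D +
          weightedSup (Ioc 0 T) n w) := by
        rw [Finset.sum_range_succ, Nat.choose_self, Nat.sub_self]
        ring
    _ ≤ _ := by gcongr <;> exact weightedSup_mono hT

end WeightedBounds

/-- `g` is `n` times continuously differentiable on `(0, ∞)` and its derivatives of order up to `n`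
have finite limits at `0+`. The class `C^n₀([0, ∞))` consists of the functions that are moreover
continuous at `0`. -/
structure ContDiffUpToZero (n : ℕ) (g : ℝ → ℝ) : Prop where
  contDiffOn : ContDiffOn ℝ n g (Ioi 0)
  exists_tendsto : ∀ k ≤ n, ∃ L, Tendsto (iteratedDeriv k g) (𝓝[>] 0) (𝓝 L)

namespace ContDiffUpToZero

variable {k n : ℕ} {g h : ℝ → ℝ}

theorem of_le (hg : ContDiffUpToZero n g) (hkn : k ≤ n) : ContDiffUpToZero k g where
  contDiffOn := hg.contDiffOn.of_le (by exact_mod_cast hkn)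
  exists_tendsto j hj := hg.exists_tendsto j (hj.trans hkn)

theorem congr (hg : ContDiffUpToZero n g) (hgh : EqOn h g (Ioi 0)) : ContDiffUpToZero n h where
  contDiffOn := hg.contDiffOn.congr hgh
  exists_tendsto k hk := (hg.exists_tendsto k hk).imp fun _ hL =>
    hL.congr' <| eventually_mem_nhdsWithin.mono
      (hgh.symm.iteratedDeriv_of_isOpen isOpen_Ioi k)

protected theorem deriv (hg : ContDiffUpToZero (n + 1) g) : ContDiffUpToZero n (deriv g) where
  contDiffOn := hg.contDiffOn.deriv_of_isOpen isOpen_Ioi (by norm_cast)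
  exists_tendsto k hk := by
    simpa only [iteratedDeriv_succ'] using hg.exists_tendsto (k + 1) (by lia)

theorem continuousOn_extendFrom (hg : ContDiffUpToZero n g) :
    ContinuousOn (extendFrom (Ioi 0) g) (Ici 0) := by
  refine _root_.continuousOn_extendFrom (by rw [closure_Ioi]) fun x (hx : 0 ≤ x) => ?_
  rcases hx.eq_or_lt with rfl | hx
  · simpa using hg.exists_tendsto 0 n.zero_le
  · exact ⟨g x, hg.contDiffOn.continuousOn x hx⟩

theorem eqOn_extendFrom (hg : ContDiffUpToZero n g) : EqOn (extendFrom (Ioi 0) g) g (Ioi 0) :=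
  fun x hx => extendFrom_extends hg.contDiffOn.continuousOn x hx

theorem isLocalPrimitive_extendFrom (hg : ContDiffUpToZero 1 g) :
    IsLocalPrimitive (extendFrom (Ioi 0) g) (extendFrom (Ioi 0) (deriv g)) where
  locallyIntegrableOn :=
    hg.deriv.continuousOn_extendFrom.locallyIntegrableOn measurableSet_Ici
  eq_add_integral u hu := by
    have hcont : ContinuousOn (extendFrom (Ioi 0) (deriv g)) (Icc 0 u) :=
      hg.deriv.continuousOn_extendFrom.mono Icc_subset_Ici_self
    have hderiv : ∀ x ∈ Ioo 0 u,
        HasDerivAt (extendFrom (Ioi 0) g) (extendFrom (Ioi 0) (deriv g) x) x := by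
      intro x hx
      rw [hg.deriv.eqOn_extendFrom hx.1]
      exact ((hg.contDiffOn.differentiableOn one_ne_zero).differentiableAt
        (Ioi_mem_nhds hx.1)).hasDerivAt.congr_of_eventuallyEq
          (hg.eqOn_extendFrom.eventuallyEq_of_mem (Ioi_mem_nhds hx.1))
    rw [intervalIntegral.integral_eq_sub_of_hasDerivAt_of_le hu
      (hg.continuousOn_extendFrom.mono Icc_subset_Ici_self) hderiv
      (hcont.intervalIntegrable_of_Icc hu)]
    ring

end ContDiffUpToZero

theorem exists_continuousOn_eqOn_deriv_of_renewal {φ : ℝ} {f m v : ℝ → ℝ}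
    (hf : ContDiffUpToZero 1 f) (hv : ContDiffUpToZero 1 v) (hv_cont : ContinuousOn v (Ici 0))
    (hm_loc : ∀ T, 0 < T → ∃ M, ∀ u ∈ Icc 0 T, |m u| ≤ M)
    (hm_eq : ∀ u, 0 ≤ u → m u = φ * causalConv f m u + v u) :
    ∃ D, ContinuousOn D (Ici 0) ∧ EqOn (deriv m) D (Ioi 0) ∧
      ∀ u, 0 < u → deriv m u = φ * causalConv f (deriv m) u + w1 φ v f u := by
  have hm_meas : AEStronglyMeasurable m (volume.restrict (Ioi 0)) :=
    aestronglyMeasurable_of_renewal hf.contDiffOn.continuousOn hv.contDiffOn.continuousOn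
      fun u hu => hm_eq u hu.le
  have hm_int : LocallyIntegrableOn m (Ici 0) := by
    refine locallyIntegrableOn_Ici_iff_forall_integrableOn_Ioc.2 fun T => ?_
    rcases le_or_gt T 0 with hT | hT
    · simp [Ioc_eq_empty_of_le hT]
    obtain ⟨M, hM⟩ := hm_loc T hT
    exact IntegrableOn.of_bound measure_Ioc_lt_top (hm_meas.mono_set Ioc_subset_Ioi_self) M
      (ae_restrict_of_forall_mem measurableSet_Ioc fun u hu => hM u (Ioc_subset_Icc_self hu))
  have hv_ext : EqOn v (extendFrom (Ioi 0) v) (Ici 0) :=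
    hv.eqOn_extendFrom.symm.of_subset_closure hv_cont hv.continuousOn_extendFrom
      Ioi_subset_Ici_self (by rw [closure_Ioi])
  have hf_conv {g : ℝ → ℝ} : causalConv (extendFrom (Ioi 0) f) g = causalConv f g :=
    causalConv_congr hf.eqOn_extendFrom fun _ _ => rfl
  obtain ⟨D, hD_cont, hm_deriv, hD_eq⟩ := exists_continuousOn_deriv_renewal
    hf.isLocalPrimitive_extendFrom (hv.isLocalPrimitive_extendFrom.congr hv_ext)
    hv.deriv.continuousOn_extendFrom hm_int (by simpa only [hf_conv] using hm_eq)
  have hD : EqOn (deriv m) D (Ioi 0) := fun u hu => (hm_deriv u hu).deriv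
  refine ⟨D, hD_cont, hD, fun u hu => ?_⟩
  rw [hD hu, hD_eq u hu, hf_conv, causalConv_congr (fun _ _ => rfl) hD,
    hf.eqOn_extendFrom hu, hv.deriv.eqOn_extendFrom hu, w1]

theorem stmt_8_general (φ : ℝ) (f v m : ℝ → ℝ) (n : ℕ)
    (hq : ‖φ‖ₑ * absMoment f 0 < 1)
    (hf : ContDiffUpToZero 1 f) (hv : ContDiffUpToZero 1 v) (hv_cont : ContinuousOn v (Ici 0))
    (hm_loc : ∀ x, 0 < x → ∃ M, ∀ u ∈ Icc 0 x, |m u| ≤ M)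
    (hm_eq : ∀ u, 0 ≤ u → m u = φ * (∫ y in (0 : ℝ)..u, m (u - y) * f y) + v u) :
    weightedSup (Ioi 0) n (deriv m) ≤
      (‖φ‖ₑ * ∑ j ∈ Finset.range n,
          n.choose j * absMoment f (n - j) * weightedSup (Ioi 0) j (deriv m) +
        weightedSup (Ioi 0) n (w1 φ v f)) / (1 - ‖φ‖ₑ * absMoment f 0) := by
  have hm_conv : ∀ u, 0 ≤ u → m u = φ * causalConv f m u + v u := fun u hu => by
    rw [hm_eq u hu, causalConv_apply hu]
    simp only [mul_comm]
  obtain ⟨D, hD_cont, hD, hderiv_eq⟩ :=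
    exists_continuousOn_eqOn_deriv_of_renewal hf hv hv_cont hm_loc hm_conv
  have hderiv_loc (T : ℝ) : ∃ M, ∀ u ∈ Ioc 0 T, |deriv m u| ≤ M := by
    obtain ⟨M, hM⟩ := isCompact_Icc.exists_bound_of_continuousOn
      (hD_cont.mono (Icc_subset_Ici_self : Icc 0 T ⊆ Ici 0))
    exact ⟨M, fun u hu => hD hu.1 ▸ hM u (Ioc_subset_Icc_self hu)⟩
  exact weightedSup_le_of_renewal
    (hf.contDiffOn.continuousOn.aemeasurable measurableSet_Ioi) hq hderiv_loc hderiv_eq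

/-- bounds on the weighted first derivative of the solution of a
defective renewal equation whose underlying distribution has finite variance:
`‖m'‖ ≤ ‖w₁‖/(1-φ)`, `‖u m'(u)‖ ≤ (φ E[Z] ‖m'‖ + ‖u w₁(u)‖)/(1-φ)`, and
`‖u² m'(u)‖ ≤ (φ(2 E[Z] ‖u m'(u)‖ + E[Z²] ‖m'‖) + ‖u² w₁(u)‖)/(1-φ)`.
All suprema are over `(0,∞)`, computed in `ℝ≥0∞` (so they may be infinite). -/
theorem stmt_8 (φ : ℝ) (hφ0 : 0 < φ) (hφ1 : φ < 1)
    (f F v m : ℝ → ℝ)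
    (hf_nonneg : ∀ u : ℝ, 0 < u → 0 ≤ f u)
    (hf_integrable : MeasureTheory.IntegrableOn f (Set.Ioi 0))
    (hf_total : ∫ y in Set.Ioi (0:ℝ), f y = 1)
    (hF_def : ∀ u : ℝ, 0 ≤ u → F u = ∫ y in (0:ℝ)..u, f y)
    (hFf : ∀ u : ℝ, 0 < u → HasDerivAt F (f u) u)
    (hZ1 : MeasureTheory.IntegrableOn (fun y => y * f y) (Set.Ioi 0))
    (hZ2 : MeasureTheory.IntegrableOn (fun y => y ^ 2 * f y) (Set.Ioi 0))
    (hv_loc : ∀ x : ℝ, 0 < x → ∃ M, ∀ u ∈ Set.Icc (0:ℝ) x, |v u| ≤ M)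
    (hm_loc : ∀ x : ℝ, 0 < x → ∃ M, ∀ u ∈ Set.Icc (0:ℝ) x, |m u| ≤ M)
    (hm_eq : ∀ u : ℝ, 0 ≤ u →
      m u = φ * (∫ y in (0:ℝ)..u, m (u - y) * f y) + v u)
    (hF_c : ContinuousOn F (Set.Ici 0)) (hF_cd : ContDiffOn ℝ 2 F (Set.Ioi 0))
    (hF_lim : ∀ k ≤ 2, ∃ L, Tendsto (iteratedDeriv k F) (𝓝[>] (0:ℝ)) (𝓝 L))
    (hv_c : ContinuousOn v (Set.Ici 0)) (hv_cd : ContDiffOn ℝ 2 v (Set.Ioi 0))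
    (hv_lim : ∀ k ≤ 2, ∃ L, Tendsto (iteratedDeriv k v) (𝓝[>] (0:ℝ)) (𝓝 L)) :
    ((⨆ u ∈ Set.Ioi (0:ℝ), (‖deriv m u‖₊ : ℝ≥0∞)) ≤
        (⨆ u ∈ Set.Ioi (0:ℝ), (‖w1 φ v f u‖₊ : ℝ≥0∞)) / ENNReal.ofReal (1 - φ)) ∧
    ((⨆ u ∈ Set.Ioi (0:ℝ), (‖u * deriv m u‖₊ : ℝ≥0∞)) ≤
        (ENNReal.ofReal (φ * ∫ y in Set.Ioi (0:ℝ), y * f y)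
            * (⨆ u ∈ Set.Ioi (0:ℝ), (‖deriv m u‖₊ : ℝ≥0∞))
          + ⨆ u ∈ Set.Ioi (0:ℝ), (‖u * w1 φ v f u‖₊ : ℝ≥0∞))
          / ENNReal.ofReal (1 - φ)) ∧
    ((⨆ u ∈ Set.Ioi (0:ℝ), (‖u ^ 2 * deriv m u‖₊ : ℝ≥0∞)) ≤
        (ENNReal.ofReal φ *
            (2 * ENNReal.ofReal (∫ y in Set.Ioi (0:ℝ), y * f y)
                * (⨆ u ∈ Set.Ioi (0:ℝ), (‖u * deriv m u‖₊ : ℝ≥0∞))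
              + ENNReal.ofReal (∫ y in Set.Ioi (0:ℝ), y ^ 2 * f y)
                * (⨆ u ∈ Set.Ioi (0:ℝ), (‖deriv m u‖₊ : ℝ≥0∞)))
          + ⨆ u ∈ Set.Ioi (0:ℝ), (‖u ^ 2 * w1 φ v f u‖₊ : ℝ≥0∞))
          / ENNReal.ofReal (1 - φ)) := by
  have hf_C1 : ContDiffUpToZero 1 f :=
    (ContDiffUpToZero.deriv ⟨hF_cd, hF_lim⟩).congr fun u hu => (hFf u hu).deriv.symm
  have hv_C1 : ContDiffUpToZero 1 v :=
    ContDiffUpToZero.of_le (n := 2) ⟨hv_cd, hv_lim⟩ one_le_two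
  have hφ : ‖φ‖ₑ = ENNReal.ofReal φ := Real.enorm_of_nonneg hφ0.le
  have hZ0 : absMoment f 0 = 1 := by
    simpa [hf_total] using absMoment_eq_ofReal_integral (n := 0) hf_nonneg (by simpa)
  have hZ1' := absMoment_eq_ofReal_integral (n := 1) hf_nonneg (by simpa)
  have hZ2' := absMoment_eq_ofReal_integral hf_nonneg hZ2
  have hbound (n : ℕ) := stmt_8_general φ f v m n (by simpa [hφ, hZ0]) hf_C1 hv_C1 hv_c hm_loc hm_eq
  have hq : 1 - ENNReal.ofReal φ = ENNReal.ofReal (1 - φ) := by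
    rw [ENNReal.ofReal_sub 1 hφ0.le, ENNReal.ofReal_one]
  simp only [← enorm_eq_nnnorm]
  refine ⟨?_, ?_, ?_⟩
  · simpa [weightedSup, hφ, hZ0, hq] using hbound 0
  · simpa [weightedSup, hφ, hZ0, hZ1', hq, ENNReal.ofReal_mul hφ0.le, mul_assoc] using hbound 1
  · simpa [weightedSup, Finset.sum_range_succ, hφ, hZ0, hZ1', hZ2', hq, add_comm] using hbound 2
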